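/- Suppose γ ≥ h. For each sufficiently small α > 0 let Z(α) ≥ 0 be a solution of the steady-state robust-queueing fixed-point equation Z(α) = sup_{u ≥ 0} { ρ(α)u − u/F̄(α·Z(α)) + b·√(ρ(α)·u·I_w(λ(α)u)/μ) }. Then there exists a finite constant Ẑ > 0 such that lim_{α↓0} α^h·Z(α) = Ẑ, and Ẑ is the unique positive root of the equation −𝟙{γ = h}·c·Ẑ + (F^{(k)}(0)/k!)·Ẑ^{k+1} = c_x²·b²/(4μ). -/

import Mathlib

open Filter Set Topology

open scoped Classical

/-!
Write `δ = 1 / F̄(α Z) - ρ` for the drift in the robust-queueing supremum. If `I_w` were constantly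
`c_x²`, the supremum of `-δ u + b √(ρ u c_x² / μ)` would be `ρ c_x² b² / (4 μ δ)`; when `δ → 0` the
maximizer is of order `δ⁻²`, where `I_w` has already converged, so in general
`δ Z → c_x² b² / (4 μ)`. Boundedness of `δ Z` forces `α Z → 0`, hence `F(α Z) ~ a (α Z)ᵏ` with
`a = F⁽ᵏ⁾(0) / k!`. For `y = α ^ h Z`, dividing `δ = F(α Z) / F̄(α Z) - (ρ - 1)` by `α ^ h` turns
the fixed-point equation into `g yᵏ - m / y = (ρ - 1) / α ^ h`, where `g → a` and
`m → c_x² b² / (4 μ)`. The left-hand side is increasing in `y`, so `y` converges to the root of the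
limiting equation. The argument runs whenever `F(x) ~ a x ^ p` at `0` with `p > 0` real and
`(ρ - 1) / α ^ h → d`, where `h = p / (p + 1)`; for `ρ = 1 + c α ^ γ` one has `d = 𝟙{γ = h} c`.
-/

section Analysis

lemma tendsto_div_pow_of_iteratedDerivWithin_eq_zero {k : ℕ} {f : ℝ → ℝ} {s : Set ℝ} {x₀ : ℝ}
    (hs : Convex ℝ s) (hx₀ : x₀ ∈ s) (hf : ContDiffOn ℝ k f s)
    (h0 : ∀ j < k, iteratedDerivWithin j f s x₀ = 0) :
    Tendsto (fun x => f x / (x - x₀) ^ k) (𝓝[s \ {x₀}] x₀)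
      (𝓝 (iteratedDerivWithin k f s x₀ / k.factorial)) := by
  have taylor_eq (x : ℝ) : taylorWithinEval f k s x₀ x
      = iteratedDerivWithin k f s x₀ / k.factorial * (x - x₀) ^ k := by
    rw [taylor_within_apply, Finset.sum_range_succ, Finset.sum_eq_zero, zero_add, smul_eq_mul]
    · ring
    · intro j hj
      rw [h0 j (Finset.mem_range.1 hj), smul_zero]
  have remainder : Tendsto (fun x => (f x - taylorWithinEval f k s x₀ x) / (x - x₀) ^ k)
      (𝓝[s \ {x₀}] x₀) (𝓝 0) :=
    ((taylor_isLittleO hs hx₀ hf).mono (nhdsWithin_mono x₀ sdiff_subset)).tendsto_div_nhds_zero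
  have shifted := remainder.add_const (iteratedDerivWithin k f s x₀ / k.factorial)
  rw [zero_add] at shifted
  refine shifted.congr' ?_
  filter_upwards [self_mem_nhdsWithin] with x hx
  have hx : (x - x₀) ^ k ≠ 0 := pow_ne_zero _ (sub_ne_zero.2 hx.2)
  rw [taylor_eq, sub_div, mul_div_cancel_right₀ _ hx, sub_add_cancel]

lemma tendsto_rpow_nhdsGT_zero {r : ℝ} (hr : 0 < r) :
    Tendsto (fun x : ℝ => x ^ r) (𝓝[>] 0) (𝓝[>] 0) := by
  refine tendsto_nhdsWithin_iff.2 ⟨?_, ?_⟩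
  · simpa [hr.ne'] using
      (Real.continuousAt_rpow_const 0 r (Or.inr hr.le)).tendsto.mono_left nhdsWithin_le_nhds
  · filter_upwards [self_mem_nhdsWithin] with x hx using Real.rpow_pos_of_pos hx r

lemma tendsto_rpow_div_rpow_nhdsGT_zero {r s : ℝ} (hrs : s ≤ r) :
    Tendsto (fun x : ℝ => x ^ r / x ^ s) (𝓝[>] 0) (𝓝 (if r = s then 1 else 0)) := by
  have hsub : Tendsto (fun x : ℝ => x ^ (r - s)) (𝓝[>] 0) (𝓝 (if r = s then 1 else 0)) := by
    split_ifs with heq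
    · simp [heq]
    · exact tendsto_nhds_of_tendsto_nhdsWithin
        (tendsto_rpow_nhdsGT_zero (sub_pos.2 (lt_of_le_of_ne hrs (Ne.symm heq))))
  refine hsub.congr' ?_
  filter_upwards [self_mem_nhdsWithin] with x hx using Real.rpow_sub hx r s

lemma isLUB_range_of_coe_eq_iSup {κ : Sort*} {f : κ → ℝ} {z : ℝ}
    (h : (z : EReal) = ⨆ i, (f i : EReal)) : IsLUB (range f) z := by
  refine IsLUB.of_image (f := Real.toEReal) EReal.coe_le_coe_iff ?_
  rw [← range_comp, h]
  exact isLUB_iSup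

lemma neg_mul_add_mul_sqrt_le {δ b A u : ℝ} (hδ : 0 < δ) (hA : 0 ≤ A) (hu : 0 ≤ u) :
    -δ * u + b * √(A * u) ≤ b ^ 2 * A / (4 * δ) := by
  have hsq : b ^ 2 * A / (4 * δ) - (-δ * u + b * √(A * u))
      = (2 * δ * √u - b * √A) ^ 2 / (4 * δ) := by
    rw [Real.sqrt_mul hA, sub_sq, mul_pow _ √u, mul_pow _ √A, Real.sq_sqrt hu, Real.sq_sqrt hA]
    field_simp
    ring
  rw [← sub_nonneg, hsq]
  positivity

variable {ι : Type*} {l : Filter ι}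

lemma tendsto_one_of_tendsto_sub_one_div {d : ℝ} {s : ι → ℝ} (hs : Tendsto s l (𝓝[>] 0))
    (hρ : Tendsto (fun i => (ρ i - 1) / s i) l (𝓝 d)) : Tendsto ρ l (𝓝 1) := by
  obtain ⟨hs0, hspos⟩ := tendsto_nhdsWithin_iff.1 hs
  have hlim := (hρ.mul hs0).add_const 1
  rw [mul_zero, zero_add] at hlim
  refine hlim.congr' ?_
  filter_upwards [hspos] with i hi
  rw [div_mul_cancel₀ _ (ne_of_gt hi), sub_add_cancel]

lemma tendsto_of_monotoneOn_of_tendsto_strictMonoOn {X Y : Type*}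
    [LinearOrder X] [TopologicalSpace X] [OrderTopology X]
    [LinearOrder Y] [TopologicalSpace Y] [OrderClosedTopology Y]
    {G : ι → X → Y} {g : X → Y} {y : ι → X} {x₀ z : X}
    (hG : ∀ᶠ i in l, MonotoneOn (G i) (Ioi x₀)) (hg : StrictMonoOn g (Ioi x₀))
    (hlim : ∀ t ∈ Ioi x₀, Tendsto (fun i => G i t) l (𝓝 (g t))) (hz : z ∈ Ioi x₀)
    (hy : ∀ᶠ i in l, y i ∈ Ioi x₀) (hGy : Tendsto (fun i => G i (y i)) l (𝓝 (g z))) :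
    Tendsto y l (𝓝 z) := by
  refine tendsto_order.2 ⟨fun t ht => ?_, fun t ht => ?_⟩
  · rcases le_or_gt t x₀ with h0 | h0
    · exact hy.mono fun i hi => h0.trans_lt hi
    · filter_upwards [hG, hy, (hlim t h0).eventually_lt hGy (hg h0 hz ht)] with i hmono hi hlt
      exact hmono.reflect_lt h0 hi hlt
  · have h0 : x₀ < t := lt_trans hz ht
    filter_upwards [hG, hy, hGy.eventually_lt (hlim t h0) (hg hz h0 ht)] with i hmono hi hlt
    exact hmono.reflect_lt hi h0 hlt

lemma tendsto_zero_of_sub_mul_tendsto_zero {φ : ℝ → ℝ} {m : ℝ} {x ρ : ι → ℝ}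
    (hφ : MonotoneOn φ (Ici 0)) (hm : ∀ t, 0 < t → m < φ t) (hx : ∀ᶠ i in l, 0 ≤ x i)
    (hρ : Tendsto ρ l (𝓝 m)) (h : Tendsto (fun i => (φ (x i) - ρ i) * x i) l (𝓝 0)) :
    Tendsto x l (𝓝 0) := by
  refine tendsto_order.2 ⟨fun t ht => hx.mono fun i hi => ht.trans_le hi, fun ε hε => ?_⟩
  have hlim : Tendsto (fun i => (φ ε - ρ i) * ε) l (𝓝 ((φ ε - m) * ε)) :=
    (hρ.const_sub _).mul_const ε
  have hpos : 0 < (φ ε - m) * ε := mul_pos (sub_pos.2 (hm ε hε)) hε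
  filter_upwards [h.eventually_lt hlim hpos, hρ.eventually (gt_mem_nhds (hm ε hε))]
    with i hlt hρi
  by_contra! hge
  have hφi : φ ε - ρ i ≤ φ (x i) - ρ i :=
    sub_le_sub_right (hφ hε.le (hε.le.trans hge) hge) _
  have hφε : 0 ≤ φ ε - ρ i := sub_nonneg.2 hρi.le
  exact hlt.not_ge (mul_le_mul hφi hge hε.le (hφε.trans hφi))

end Analysis

section LimitEquation

variable {p a d L z : ℝ}

lemma strictMonoOn_mul_rpow_sub_div (hp : 0 < p) (ha : 0 < a) (hL : 0 ≤ L) :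
    StrictMonoOn (fun y : ℝ => a * y ^ p - L / y) (Ioi 0) := by
  intro x hx y _ hxy
  have hx : 0 < x := hx
  have hpow : a * x ^ p < a * y ^ p := by gcongr
  have hdiv : L / y ≤ L / x := by gcongr
  simp only
  linarith

lemma surjOn_mul_rpow_sub_div (hp : 0 < p) (ha : 0 < a) (hL : 0 < L) :
    SurjOn (fun y : ℝ => a * y ^ p - L / y) (Ioi 0) univ := by
  have hcont : ContinuousOn (fun y : ℝ => a * y ^ p - L / y) (Ioi 0) :=
    (continuousOn_const.mul (continuousOn_id.rpow_const fun _ _ => Or.inr hp.le)).sub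
      (continuousOn_const.div continuousOn_id fun _ hy => ne_of_gt hy)
  have hzero : Tendsto (fun y : ℝ => a * y ^ p - L / y) (𝓝[>] 0) atBot := by
    have hpow : Tendsto (fun y : ℝ => a * y ^ p) (𝓝[>] 0) (𝓝 (a * 0)) :=
      (tendsto_nhds_of_tendsto_nhdsWithin (tendsto_rpow_nhdsGT_zero hp)).const_mul a
    have hdiv : Tendsto (fun y : ℝ => L / y) (𝓝[>] 0) atTop :=
      tendsto_inv_nhdsGT_zero.const_mul_atTop hL
    simpa only [sub_eq_add_neg] using
      hpow.add_atBot (tendsto_neg_atBot_iff.2 hdiv)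
  have htop : Tendsto (fun y : ℝ => a * y ^ p - L / y) atTop atTop := by
    have hdiv : Tendsto (fun y : ℝ => -(L / y)) atTop (𝓝 (-0)) :=
      (tendsto_const_nhds.div_atTop tendsto_id).neg
    simpa only [sub_eq_add_neg] using
      ((tendsto_rpow_atTop hp).const_mul_atTop ha).atTop_add hdiv
  exact hcont.surjOn_of_tendsto nonempty_Ioi ((tendsto_comp_coe_Ioi_atBot).2 hzero)
    (tendsto_comp_val_Ioi_atTop.2 htop)

lemma mul_rpow_sub_div_eq_iff (hz : 0 < z) :
    a * z ^ p - L / z = d ↔ -d * z + a * z ^ (p + 1) = L := by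
  rw [Real.rpow_add_one hz.ne', sub_eq_iff_eq_add, ← sub_eq_iff_eq_add', eq_div_iff hz.ne']
  ring_nf

end LimitEquation

/-- The index of dispersion for work `I_w` of the arrival process, a nonnegative bounded function
with a positive limit `c_x²`. -/
structure IsDispersionIndex (Iw : ℝ → ℝ) (cx2 : ℝ) : Prop where
  nonneg : ∀ t, 0 ≤ t → 0 ≤ Iw t
  bounded : ∃ C, ∀ t, 0 ≤ t → Iw t ≤ C
  limit_pos : 0 < cx2
  tendsto : Tendsto Iw atTop (𝓝 cx2)

/-- The robust-queueing objective, with the two terms linear in `u` collected into a drift: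
`δ` stands for `1 / F̄(α z) - ρ`. -/
noncomputable def rqObjective (Iw : ℝ → ℝ) (μ b ρ δ u : ℝ) : ℝ :=
  -δ * u + b * √(ρ * u * Iw (ρ * μ * u) / μ)

/-- `z` is the robust-queueing workload, that is, the (finite) supremum over `u ≥ 0` of the
objective with traffic intensity `ρ` and drift `-δ`. -/
def IsRQWorkload (Iw : ℝ → ℝ) (μ b ρ δ z : ℝ) : Prop :=
  IsLUB (rqObjective Iw μ b ρ δ '' Ici 0) z

section Workload

variable {Iw : ℝ → ℝ} {μ b ρ δ z cx2 : ℝ}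

lemma rqObjective_le {B u : ℝ} (hμ : 0 < μ) (hb : 0 < b) (hρ : 0 < ρ) (hδ : 0 < δ) (hB : 0 ≤ B)
    (hu : 0 ≤ u) (h : Iw (ρ * μ * u) ≤ B) :
    rqObjective Iw μ b ρ δ u ≤ b ^ 2 * (ρ * B / μ) / (4 * δ) := by
  refine le_trans ?_ (neg_mul_add_mul_sqrt_le hδ (by positivity) hu)
  have : ρ * u * Iw (ρ * μ * u) / μ ≤ ρ * B / μ * u := by
    rw [div_mul_eq_mul_div, mul_right_comm ρ B u]
    gcongr
  unfold rqObjective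
  gcongr

lemma rqObjective_le_of_mul_le {C T u : ℝ} (hμ : 0 < μ) (hb : 0 < b) (hρ : 0 < ρ) (hδ : 0 < δ)
    (hC : 0 ≤ C) (hu : 0 ≤ u) (h : Iw (ρ * μ * u) ≤ C) (hT : ρ * μ * u ≤ T) :
    rqObjective Iw μ b ρ δ u ≤ b * √(T / μ * C / μ) := by
  have hTu : ρ * u ≤ T / μ := (le_div_iff₀ hμ).2 (by linarith)
  have hvar : ρ * u * Iw (ρ * μ * u) ≤ T / μ * C :=
    (mul_le_mul_of_nonneg_left h (by positivity)).trans (mul_le_mul_of_nonneg_right hTu hC)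
  calc rqObjective Iw μ b ρ δ u ≤ b * √(ρ * u * Iw (ρ * μ * u) / μ) :=
        add_le_of_nonpos_left (mul_nonpos_of_nonpos_of_nonneg (neg_nonpos.2 hδ.le) hu)
    _ ≤ b * √(T / μ * C / μ) := by gcongr

-- The time scale `δ⁻²` is the one on which the two terms of the objective balance.
lemma mul_rqObjective_div_sq (hδ : 0 < δ) (s : ℝ) :
    δ * rqObjective Iw μ b ρ δ (s / δ ^ 2)
      = -s + b * √(ρ * s * Iw (ρ * μ * (s / δ ^ 2)) / μ) := by
  have hvar : ρ * (s / δ ^ 2) * Iw (ρ * μ * (s / δ ^ 2)) / μ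
      = ρ * s * Iw (ρ * μ * (s / δ ^ 2)) / μ / δ ^ 2 := by ring
  rw [rqObjective, hvar, Real.sqrt_div' _ (sq_nonneg δ), Real.sqrt_sq hδ.le]
  field_simp

lemma tendsto_rqObjective_atTop (hI : IsDispersionIndex Iw cx2) (hμ : 0 < μ) (hb : 0 < b)
    (hρ : 0 < ρ) (hδ : δ ≤ 0) : Tendsto (rqObjective Iw μ b ρ δ) atTop atTop := by
  have hIw : Tendsto (fun u => Iw (ρ * μ * u)) atTop (𝓝 cx2) :=
    hI.tendsto.comp (tendsto_id.const_mul_atTop (by positivity))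
  have hvar : Tendsto (fun u => ρ * u * Iw (ρ * μ * u) / μ) atTop atTop :=
    ((tendsto_id.const_mul_atTop hρ).atTop_mul_pos hI.limit_pos hIw).atTop_div_const hμ
  refine tendsto_atTop_mono' _ ?_ ((Real.tendsto_sqrt_atTop.comp hvar).const_mul_atTop hb)
  filter_upwards [eventually_ge_atTop 0] with u hu
  exact le_add_of_nonneg_left (mul_nonneg (neg_nonneg.2 hδ) hu)

lemma IsRQWorkload.nonneg (hz : IsRQWorkload Iw μ b ρ δ z) : 0 ≤ z :=
  hz.1 ⟨0, self_mem_Ici, by simp [rqObjective]⟩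

lemma IsRQWorkload.drift_pos (hz : IsRQWorkload Iw μ b ρ δ z) (hI : IsDispersionIndex Iw cx2)
    (hμ : 0 < μ) (hb : 0 < b) (hρ : 0 < ρ) : 0 < δ := by
  by_contra! hδ
  obtain ⟨u, hu, hu0⟩ := (((tendsto_rqObjective_atTop hI hμ hb hρ hδ).eventually_gt_atTop z).and
    (eventually_ge_atTop 0)).exists
  exact hu.not_ge (hz.1 ⟨u, hu0, rfl⟩)

lemma IsRQWorkload.drift_mul_le {C : ℝ} (hz : IsRQWorkload Iw μ b ρ δ z) (hμ : 0 < μ)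
    (hb : 0 < b) (hρ : 0 < ρ) (hδ : 0 < δ) (hC0 : 0 ≤ C) (hC : ∀ t, 0 ≤ t → Iw t ≤ C) :
    δ * z ≤ b ^ 2 * (ρ * C / μ) / 4 := by
  have hzC : z ≤ b ^ 2 * (ρ * C / μ) / (4 * δ) := by
    apply hz.2
    rintro _ ⟨u, hu : 0 ≤ u, rfl⟩
    exact rqObjective_le hμ hb hρ hδ hC0 hu (hC _ (by positivity))
  calc δ * z ≤ δ * (b ^ 2 * (ρ * C / μ) / (4 * δ)) := by gcongr
    _ = b ^ 2 * (ρ * C / μ) / 4 := by field_simp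

lemma IsRQWorkload.drift_mul_le_max {B C T : ℝ} (hz : IsRQWorkload Iw μ b ρ δ z) (hμ : 0 < μ)
    (hb : 0 < b) (hρ : 0 < ρ) (hδ : 0 < δ) (hB0 : 0 ≤ B) (hB : ∀ t, T ≤ t → Iw t ≤ B)
    (hC0 : 0 ≤ C) (hC : ∀ t, 0 ≤ t → Iw t ≤ C) :
    δ * z ≤ max (b ^ 2 * (ρ * B / μ) / 4) (δ * (b * √(T / μ * C / μ))) := by
  have hzmax : z ≤ max (b ^ 2 * (ρ * B / μ) / (4 * δ)) (b * √(T / μ * C / μ)) := by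
    apply hz.2
    rintro _ ⟨u, hu : 0 ≤ u, rfl⟩
    rcases le_total T (ρ * μ * u) with hT | hT
    · exact le_max_of_le_left (rqObjective_le hμ hb hρ hδ hB0 hu (hB _ hT))
    · exact le_max_of_le_right
        (rqObjective_le_of_mul_le hμ hb hρ hδ hC0 hu (hC _ (by positivity)) hT)
  calc δ * z
      ≤ δ * max (b ^ 2 * (ρ * B / μ) / (4 * δ)) (b * √(T / μ * C / μ)) := by gcongr
    _ = max (b ^ 2 * (ρ * B / μ) / 4) (δ * (b * √(T / μ * C / μ))) := by
      rw [mul_max_of_nonneg _ _ hδ.le]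
      congr 1
      field_simp

end Workload

section VanishingDrift

variable {ι : Type*} {l : Filter ι} {Iw : ℝ → ℝ} {μ b cx2 : ℝ} {ρ δ z : ι → ℝ}

lemma tendsto_mul_rqObjective_div_sq {s : ℝ} (hI : IsDispersionIndex Iw cx2) (hμ : 0 < μ)
    (hs : 0 < s) (hρ : Tendsto ρ l (𝓝 1)) (hδ : Tendsto δ l (𝓝[>] 0)) :
    Tendsto (fun i => δ i * rqObjective Iw μ b (ρ i) (δ i) (s / δ i ^ 2)) l
      (𝓝 (-s + b * √(s * cx2 / μ))) := by
  have hδ0 : ∀ᶠ i in l, 0 < δ i := (tendsto_nhdsWithin_iff.1 hδ).2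
  have hδsq : Tendsto (fun i => δ i ^ 2) l (𝓝[>] 0) :=
    tendsto_nhdsWithin_iff.2 ⟨by simpa using (tendsto_nhds_of_tendsto_nhdsWithin hδ).pow 2,
      hδ0.mono fun i hi => pow_pos hi 2⟩
  have htime : Tendsto (fun i => ρ i * μ * (s / δ i ^ 2)) l atTop :=
    (hρ.mul_const μ).pos_mul_atTop (by simpa using hμ)
      (hδsq.inv_tendsto_nhdsGT_zero.const_mul_atTop hs)
  have hlim : Tendsto (fun i => -s + b * √(ρ i * s * Iw (ρ i * μ * (s / δ i ^ 2)) / μ)) l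
      (𝓝 (-s + b * √(1 * s * cx2 / μ))) :=
    ((((hρ.mul_const s).mul (hI.tendsto.comp htime)).div_const μ).sqrt.const_mul b).const_add (-s)
  rw [one_mul] at hlim
  refine hlim.congr' ?_
  filter_upwards [hδ0] with i hi using (mul_rqObjective_div_sq hi s).symm

lemma eventually_lt_drift_mul_workload {t : ℝ} (hI : IsDispersionIndex Iw cx2) (hμ : 0 < μ)
    (hb : 0 < b) (hρ : Tendsto ρ l (𝓝 1)) (hδ : Tendsto δ l (𝓝[>] 0))
    (hz : ∀ᶠ i in l, IsRQWorkload Iw μ b (ρ i) (δ i) (z i)) (ht : t < cx2 * b ^ 2 / (4 * μ)) :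
    ∀ᶠ i in l, t < δ i * z i := by
  have hcx2 := hI.limit_pos
  set L := cx2 * b ^ 2 / (4 * μ) with hL
  have hL0 : 0 < L := by positivity
  -- `s = L` maximizes `-s + b √(s cx2 / μ)`, and the maximum is again `L`.
  have hmax : -L + b * √(L * cx2 / μ) = L := by
    have hsq : L * cx2 / μ = (cx2 * b / (2 * μ)) ^ 2 := by rw [hL]; field_simp; ring
    rw [hsq, Real.sqrt_sq (by positivity), hL]
    field_simp
    ring
  have hlim := tendsto_mul_rqObjective_div_sq (b := b) hI hμ hL0 hρ hδ
  rw [hmax] at hlim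
  filter_upwards [hlim.eventually (lt_mem_nhds ht), (tendsto_nhdsWithin_iff.1 hδ).2, hz]
    with i hlt (hδi : 0 < δ i) hzi
  have hu : L / δ i ^ 2 ∈ Ici 0 := mem_Ici.2 (by positivity)
  exact hlt.trans_le (mul_le_mul_of_nonneg_left (hzi.1 ⟨_, hu, rfl⟩) hδi.le)

lemma eventually_drift_mul_workload_lt {t : ℝ} (hI : IsDispersionIndex Iw cx2) (hμ : 0 < μ)
    (hb : 0 < b) (hρ : Tendsto ρ l (𝓝 1)) (hδ : Tendsto δ l (𝓝[>] 0))
    (hz : ∀ᶠ i in l, IsRQWorkload Iw μ b (ρ i) (δ i) (z i)) (ht : cx2 * b ^ 2 / (4 * μ) < t) :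
    ∀ᶠ i in l, δ i * z i < t := by
  obtain ⟨C, hC⟩ := hI.bounded
  have hC0 : 0 ≤ C := (hI.nonneg 0 le_rfl).trans (hC 0 le_rfl)
  obtain ⟨B, hB, hBt⟩ : ∃ B, cx2 < B ∧ b ^ 2 * (1 * B / μ) / 4 < t := by
    have hlim : Tendsto (fun B : ℝ => b ^ 2 * (1 * B / μ) / 4) (𝓝[>] cx2)
        (𝓝 (b ^ 2 * (1 * cx2 / μ) / 4)) :=
      (Continuous.tendsto (by fun_prop) cx2).mono_left nhdsWithin_le_nhds
    have hcx2 : b ^ 2 * (1 * cx2 / μ) / 4 < t := lt_of_eq_of_lt (by field_simp) ht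
    exact ((eventually_mem_nhdsWithin (a := cx2)).and
      (hlim.eventually (gt_mem_nhds hcx2))).exists
  have hB0 : 0 < B := hI.limit_pos.trans hB
  have ht0 : 0 < t := lt_trans (by positivity) hBt
  obtain ⟨T, hT⟩ := eventually_atTop.1 (hI.tendsto.eventually (gt_mem_nhds hB))
  have hlim : Tendsto
      (fun i => max (b ^ 2 * (ρ i * B / μ) / 4) (δ i * (b * √(T / μ * C / μ)))) l
      (𝓝 (max (b ^ 2 * (1 * B / μ) / 4) (0 * (b * √(T / μ * C / μ))))) :=
    ((((hρ.mul_const B).div_const μ).const_mul _).div_const 4).max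
      ((tendsto_nhds_of_tendsto_nhdsWithin hδ).mul_const _)
  have hmax : max (b ^ 2 * (1 * B / μ) / 4) (0 * (b * √(T / μ * C / μ))) < t :=
    max_lt hBt (by rwa [zero_mul])
  filter_upwards [hlim.eventually (gt_mem_nhds hmax), (tendsto_nhdsWithin_iff.1 hδ).2, hz,
    hρ.eventually (lt_mem_nhds one_pos)] with i hlt hδi hzi hρi
  exact (hzi.drift_mul_le_max hμ hb hρi hδi hB0.le (fun s hs => (hT s hs).le) hC0 hC).trans_lt hlt

theorem tendsto_drift_mul_workload (hI : IsDispersionIndex Iw cx2) (hμ : 0 < μ) (hb : 0 < b)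
    (hρ : Tendsto ρ l (𝓝 1)) (hδ : Tendsto δ l (𝓝[>] 0))
    (hz : ∀ᶠ i in l, IsRQWorkload Iw μ b (ρ i) (δ i) (z i)) :
    Tendsto (fun i => δ i * z i) l (𝓝 (cx2 * b ^ 2 / (4 * μ))) :=
  tendsto_order.2 ⟨fun _ => eventually_lt_drift_mul_workload hI hμ hb hρ hδ hz,
    fun _ => eventually_drift_mul_workload_lt hI hμ hb hρ hδ hz⟩

end VanishingDrift

/-- `F` is the distribution function, on `[0, ∞)`, of an unbounded patience time with
`F x ~ a * x ^ p` as `x ↓ 0`. The total mass may be less than one: some customers may never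
abandon. -/
structure IsPatienceCDF (F : ℝ → ℝ) (p a : ℝ) : Prop where
  zero : F 0 = 0
  monotoneOn : MonotoneOn F (Ici 0)
  lt_one : ∀ x, 0 ≤ x → F x < 1
  exponent_pos : 0 < p
  coeff_pos : 0 < a
  tendsto_div_rpow : Tendsto (fun x => F x / x ^ p) (𝓝[>] 0) (𝓝 a)

namespace IsPatienceCDF

variable {F : ℝ → ℝ} {p a x : ℝ}

lemma pos (hF : IsPatienceCDF F p a) (hx : 0 < x) : 0 < F x := by
  obtain ⟨y, hFy, hy, hyx⟩ := ((hF.tendsto_div_rpow.eventually (lt_mem_nhds hF.coeff_pos)).and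
    (Ioo_mem_nhdsGT hx)).exists
  exact ((div_pos_iff_of_pos_right (Real.rpow_pos_of_pos hy p)).1 hFy).trans_le
    (hF.monotoneOn hy.le hx.le hyx.le)

lemma continuousWithinAt_zero (hF : IsPatienceCDF F p a) : ContinuousWithinAt F (Ici 0) 0 := by
  rw [← continuousWithinAt_Ioi_iff_Ici, ContinuousWithinAt, hF.zero]
  have hmul := hF.tendsto_div_rpow.mul
    (tendsto_nhds_of_tendsto_nhdsWithin (tendsto_rpow_nhdsGT_zero hF.exponent_pos))
  rw [mul_zero] at hmul
  refine hmul.congr' ?_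
  filter_upwards [self_mem_nhdsWithin] with x hx
  exact div_mul_cancel₀ _ (Real.rpow_pos_of_pos hx p).ne'

lemma tendsto_one_sub (hF : IsPatienceCDF F p a) : Tendsto (fun x => 1 - F x) (𝓝[≥] 0) (𝓝 1) := by
  simpa [hF.zero] using hF.continuousWithinAt_zero.tendsto.const_sub 1

lemma tendsto_div_rpow_div_one_sub (hF : IsPatienceCDF F p a) :
    Tendsto (fun x => F x / x ^ p / (1 - F x)) (𝓝[>] 0) (𝓝 a) := by
  have hsub := hF.tendsto_one_sub.mono_left (nhdsWithin_mono 0 Ioi_subset_Ici_self)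
  simpa only [div_one] using! hF.tendsto_div_rpow.div hsub one_ne_zero

lemma monotoneOn_one_div_one_sub (hF : IsPatienceCDF F p a) :
    MonotoneOn (fun x => 1 / (1 - F x)) (Ici 0) := fun _ hx y hy hxy =>
  one_div_le_one_div_of_le (sub_pos.2 (hF.lt_one y hy))
    (sub_le_sub_left (hF.monotoneOn hx hy hxy) 1)

lemma one_lt_one_div_one_sub (hF : IsPatienceCDF F p a) (hx : 0 < x) : 1 < 1 / (1 - F x) :=
  one_lt_one_div (sub_pos.2 (hF.lt_one x hx.le)) (sub_lt_self 1 (hF.pos hx))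

end IsPatienceCDF

/-- The drift `1 / F̄(α z) - ρ` of the robust-queueing objective, for patience times stretched by
the factor `1 / α`. -/
noncomputable def rqDrift (F : ℝ → ℝ) (α ρ z : ℝ) : ℝ :=
  1 / (1 - F (α * z)) - ρ

/-- `z` solves the steady-state robust-queueing fixed-point equation with abandonment. -/
def IsRQFixedPoint (F Iw : ℝ → ℝ) (μ b α ρ z : ℝ) : Prop :=
  IsRQWorkload Iw μ b ρ (rqDrift F α ρ z) z

lemma isRQFixedPoint_of_coe_eq_iSup {F Iw : ℝ → ℝ} {μ b α ρ z : ℝ}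
    (h : (z : EReal) = ⨆ u : {u : ℝ // 0 ≤ u}, ((ρ * (u : ℝ) - (u : ℝ) / (1 - F (α * z))
      + b * √(ρ * (u : ℝ) * Iw (ρ * μ * (u : ℝ)) / μ) : ℝ) : EReal)) :
    IsRQFixedPoint F Iw μ b α ρ z := by
  have hobj (u : ℝ) : ρ * u - u / (1 - F (α * z)) + b * √(ρ * u * Iw (ρ * μ * u) / μ)
      = rqObjective Iw μ b ρ (rqDrift F α ρ z) u := by
    rw [rqObjective, rqDrift]
    ring
  simp only [hobj] at h
  rw [IsRQFixedPoint, IsRQWorkload, image_eq_range]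
  exact isLUB_range_of_coe_eq_iSup h

lemma mul_rpow_eq_rpow_mul_rpow {α z p : ℝ} (hα : 0 < α) (hz : 0 ≤ z) (hp : p + 1 ≠ 0) :
    (α * z) ^ p = (α ^ (p / (p + 1)) * z) ^ p * α ^ (p / (p + 1)) := by
  have hexp : p / (p + 1) * p + p / (p + 1) = p := by field_simp
  rw [Real.mul_rpow hα.le hz, Real.mul_rpow (Real.rpow_nonneg hα.le _) hz, ← Real.rpow_mul hα.le,
    mul_right_comm, ← Real.rpow_add hα, hexp]

lemma scaled_drift_balance {F : ℝ → ℝ} {p α ρ z : ℝ} (hp : p + 1 ≠ 0) (hα : 0 < α) (hz : 0 < z)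
    (hF : F (α * z) < 1) :
    F (α * z) / (α * z) ^ p / (1 - F (α * z)) * (α ^ (p / (p + 1)) * z) ^ p
        - rqDrift F α ρ z * z / (α ^ (p / (p + 1)) * z)
      = (ρ - 1) / α ^ (p / (p + 1)) := by
  have hF' : 1 - F (α * z) ≠ 0 := (sub_pos.2 hF).ne'
  have hαh : 0 < α ^ (p / (p + 1)) := Real.rpow_pos_of_pos hα _
  have : (α ^ (p / (p + 1)) * z) ^ p ≠ 0 := (Real.rpow_pos_of_pos (mul_pos hαh hz) p).ne'
  rw [mul_rpow_eq_rpow_mul_rpow hα hz.le hp, rqDrift]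
  field_simp
  ring

section HeavyTraffic

variable {ι : Type*} {l : Filter ι} {F Iw : ℝ → ℝ} {p a μ b cx2 : ℝ} {α ρ Z : ι → ℝ}

lemma eventually_rqDrift_pos (hI : IsDispersionIndex Iw cx2) (hμ : 0 < μ) (hb : 0 < b)
    (hρ : Tendsto ρ l (𝓝 1)) (hZ : ∀ᶠ i in l, IsRQFixedPoint F Iw μ b (α i) (ρ i) (Z i)) :
    ∀ᶠ i in l, 0 < rqDrift F (α i) (ρ i) (Z i) := by
  filter_upwards [hZ, hρ.eventually (lt_mem_nhds one_pos)] with i hZi hρi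
  exact hZi.drift_pos hI hμ hb hρi

lemma tendsto_mul_fixedPoint_zero (hF : IsPatienceCDF F p a) (hI : IsDispersionIndex Iw cx2)
    (hμ : 0 < μ) (hb : 0 < b) (hα : Tendsto α l (𝓝[>] 0)) (hρ : Tendsto ρ l (𝓝 1))
    (hZ : ∀ᶠ i in l, IsRQFixedPoint F Iw μ b (α i) (ρ i) (Z i)) :
    Tendsto (fun i => α i * Z i) l (𝓝[≥] 0) := by
  obtain ⟨hα0, hαpos⟩ := tendsto_nhdsWithin_iff.1 hα
  obtain ⟨C, hC⟩ := hI.bounded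
  have hC0 : 0 ≤ C := (hI.nonneg 0 le_rfl).trans (hC 0 le_rfl)
  have hnonneg : ∀ᶠ i in l, 0 ≤ α i * Z i := by
    filter_upwards [hαpos, hZ] with i hαi hZi using mul_nonneg (le_of_lt hαi) hZi.nonneg
  have hδpos := eventually_rqDrift_pos hI hμ hb hρ hZ
  have hbound : Tendsto (fun i => b ^ 2 * (ρ i * C / μ) / 4 * α i) l (𝓝 0) := by
    simpa using ((((hρ.mul_const C).div_const μ).const_mul (b ^ 2)).div_const 4).mul hα0
  have hδx : Tendsto (fun i => rqDrift F (α i) (ρ i) (Z i) * (α i * Z i)) l (𝓝 0) := by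
    refine squeeze_zero' ?_ ?_ hbound
    · filter_upwards [hδpos, hnonneg] with i hδi hxi using mul_nonneg hδi.le hxi
    · filter_upwards [hZ, hδpos, hαpos, hρ.eventually (lt_mem_nhds one_pos)]
        with i hZi hδi hαi hρi
      rw [mul_comm (α i), ← mul_assoc]
      exact mul_le_mul_of_nonneg_right (hZi.drift_mul_le hμ hb hρi hδi hC0 hC) (le_of_lt hαi)
  exact tendsto_nhdsWithin_iff.2 ⟨tendsto_zero_of_sub_mul_tendsto_zero
    hF.monotoneOn_one_div_one_sub (fun _ => hF.one_lt_one_div_one_sub) hnonneg hρ hδx, hnonneg⟩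

lemma tendsto_rqDrift_zero (hF : IsPatienceCDF F p a) (hI : IsDispersionIndex Iw cx2)
    (hμ : 0 < μ) (hb : 0 < b) (hα : Tendsto α l (𝓝[>] 0)) (hρ : Tendsto ρ l (𝓝 1))
    (hZ : ∀ᶠ i in l, IsRQFixedPoint F Iw μ b (α i) (ρ i) (Z i)) :
    Tendsto (fun i => rqDrift F (α i) (ρ i) (Z i)) l (𝓝[>] 0) := by
  have hF1 := hF.tendsto_one_sub.comp (tendsto_mul_fixedPoint_zero hF hI hμ hb hα hρ hZ)
  refine tendsto_nhdsWithin_iff.2 ⟨?_, eventually_rqDrift_pos hI hμ hb hρ hZ⟩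
  simpa [rqDrift, Function.comp_def] using (hF1.inv₀ one_ne_zero).sub hρ

lemma tendsto_scaled_fixedPoint {d z : ℝ} (hF : IsPatienceCDF F p a)
    (hI : IsDispersionIndex Iw cx2) (hμ : 0 < μ) (hb : 0 < b) (hα : Tendsto α l (𝓝[>] 0))
    (hρ : Tendsto (fun i => (ρ i - 1) / α i ^ (p / (p + 1))) l (𝓝 d))
    (hZ : ∀ᶠ i in l, IsRQFixedPoint F Iw μ b (α i) (ρ i) (Z i)) (hz0 : 0 < z)
    (hz : a * z ^ p - cx2 * b ^ 2 / (4 * μ) / z = d) :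
    Tendsto (fun i => α i ^ (p / (p + 1)) * Z i) l (𝓝 z) := by
  have hp := hF.exponent_pos
  have hL : 0 < cx2 * b ^ 2 / (4 * μ) := by have := hI.limit_pos; positivity
  have hαpos : ∀ᶠ i in l, 0 < α i := (tendsto_nhdsWithin_iff.1 hα).2
  have hρ1 : Tendsto ρ l (𝓝 1) := tendsto_one_of_tendsto_sub_one_div
    ((tendsto_rpow_nhdsGT_zero (by positivity)).comp hα) hρ
  have hδ := tendsto_rqDrift_zero hF hI hμ hb hα hρ1 hZ
  have hδZ := tendsto_drift_mul_workload hI hμ hb hρ1 hδ hZ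
  have hZpos : ∀ᶠ i in l, 0 < Z i := by
    filter_upwards [hδZ.eventually (lt_mem_nhds hL), (tendsto_nhdsWithin_iff.1 hδ).2]
      with i hi hδi using (pos_iff_pos_of_mul_pos hi).1 hδi
  have hx := tendsto_mul_fixedPoint_zero hF hI hμ hb hα hρ1 hZ
  have hxpos : Tendsto (fun i => α i * Z i) l (𝓝[>] 0) := tendsto_nhdsWithin_iff.2
    ⟨tendsto_nhds_of_tendsto_nhdsWithin hx, (hαpos.and hZpos).mono fun _ h => mul_pos h.1 h.2⟩
  have hcoeff := hF.tendsto_div_rpow_div_one_sub.comp hxpos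
  refine tendsto_of_monotoneOn_of_tendsto_strictMonoOn (x₀ := 0)
    (G := fun i y => F (α i * Z i) / (α i * Z i) ^ p / (1 - F (α i * Z i)) * y ^ p
      - rqDrift F (α i) (ρ i) (Z i) * Z i / y) ?_
    (strictMonoOn_mul_rpow_sub_div hp hF.coeff_pos hL.le)
    (fun t _ => (hcoeff.mul_const _).sub (hδZ.div_const t)) hz0 ?_ ?_
  · filter_upwards [hcoeff.eventually (lt_mem_nhds hF.coeff_pos),
      hδZ.eventually (lt_mem_nhds hL)] with i hg hm
    exact (strictMonoOn_mul_rpow_sub_div hp hg hm.le).monotoneOn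
  · filter_upwards [hαpos, hZpos] with i hαi hZi
    exact mul_pos (Real.rpow_pos_of_pos hαi _) hZi
  · simp only [hz]
    refine hρ.congr' ?_
    filter_upwards [hαpos, hZpos] with i hαi hZi
    exact (scaled_drift_balance (by positivity) hαi hZi
      (hF.lt_one _ (mul_pos hαi hZi).le)).symm

end HeavyTraffic

theorem rq_heavy_traffic_critical_general {ι : Type*} {l : Filter ι} {F Iw : ℝ → ℝ}
    {p a μ b cx2 d : ℝ} {α ρ Z : ι → ℝ} (hF : IsPatienceCDF F p a)
    (hI : IsDispersionIndex Iw cx2) (hμ : 0 < μ) (hb : 0 < b) (hα : Tendsto α l (𝓝[>] 0))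
    (hρ : Tendsto (fun i => (ρ i - 1) / α i ^ (p / (p + 1))) l (𝓝 d))
    (hZ : ∀ᶠ i in l, IsRQFixedPoint F Iw μ b (α i) (ρ i) (Z i)) :
    ∃ Zhat : ℝ, 0 < Zhat ∧
      Tendsto (fun i => α i ^ (p / (p + 1)) * Z i) l (𝓝 Zhat) ∧
      -d * Zhat + a * Zhat ^ (p + 1) = cx2 * b ^ 2 / (4 * μ) ∧
      ∀ z : ℝ, 0 < z → -d * z + a * z ^ (p + 1) = cx2 * b ^ 2 / (4 * μ) → z = Zhat := by
  have hL : 0 < cx2 * b ^ 2 / (4 * μ) := by have := hI.limit_pos; positivity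
  obtain ⟨Zhat, hZhat0, hZhat⟩ :=
    surjOn_mul_rpow_sub_div hF.exponent_pos hF.coeff_pos hL (mem_univ d)
  refine ⟨Zhat, hZhat0, tendsto_scaled_fixedPoint hF hI hμ hb hα hρ hZ hZhat0 hZhat,
    (mul_rpow_sub_div_eq_iff hZhat0).1 hZhat, fun z hz0 hz => ?_⟩
  exact (strictMonoOn_mul_rpow_sub_div hF.exponent_pos hF.coeff_pos hL.le).injOn hz0 hZhat0
    (((mul_rpow_sub_div_eq_iff hz0).2 hz).trans hZhat.symm)

lemma isPatienceCDF_of_contDiffOn {k : ℕ} {F : ℝ → ℝ} (hk : k ≠ 0)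
    (hF_mono : MonotoneOn F (Ici 0)) (hF_lt_one : ∀ x, 0 ≤ x → F x < 1)
    (hF_smooth : ContDiffOn ℝ k F (Ici 0))
    (hF_derivs : ∀ j < k, iteratedDerivWithin j F (Ici 0) 0 = 0)
    (hF_k : 0 < iteratedDerivWithin k F (Ici 0) 0) :
    IsPatienceCDF F k (iteratedDerivWithin k F (Ici 0) 0 / k.factorial) where
  zero := by simpa using hF_derivs 0 (Nat.pos_of_ne_zero hk)
  monotoneOn := hF_mono
  lt_one := hF_lt_one
  exponent_pos := Nat.cast_pos.2 (Nat.pos_of_ne_zero hk)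
  coeff_pos := by positivity
  tendsto_div_rpow := by
    simpa [Ici_sdiff_left] using tendsto_div_pow_of_iteratedDerivWithin_eq_zero
      (convex_Ici 0) self_mem_Ici hF_smooth hF_derivs

/-- heavy-traffic limit of the RQ fixed point in the critically loaded
regime (`γ ≥ h = k/(k+1)`).  With the same data as in the underloaded case,
there exists a finite constant `Ẑ > 0` such that `α^h Z(α) → Ẑ`, and `Ẑ` is the
unique positive root of
`-𝟙{γ = h} c Ẑ + (F^{(k)}(0)/k!) Ẑ^{k+1} = c_x² b² / (4 μ)`. -/
theorem rq_heavy_traffic_critical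
    (k : ℕ) (hk : 1 ≤ k)
    (F : ℝ → ℝ)
    (hF_mono : Monotone F)
    (hF_zero : ∀ x ≤ (0 : ℝ), F x = 0)
    (hF_range : ∀ x, 0 ≤ x → 0 ≤ F x ∧ F x < 1)
    (hF_lim : Tendsto F atTop (𝓝 1))
    (hF_smooth : ContDiffOn ℝ k F (Set.Ici 0))
    (hF_derivs : ∀ j < k, iteratedDerivWithin j F (Set.Ici 0) 0 = 0)
    (hF_k : 0 < iteratedDerivWithin k F (Set.Ici 0) 0)
    (Iw : ℝ → ℝ) (hIw_cont : Continuous Iw)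
    (hIw_nonneg : ∀ t, 0 ≤ t → 0 ≤ Iw t)
    (hIw_bdd : ∃ C : ℝ, ∀ t, 0 ≤ t → Iw t ≤ C)
    (cx2 : ℝ) (hcx2 : 0 < cx2)
    (hIw_lim : Tendsto Iw atTop (𝓝 cx2))
    (μ b γ c : ℝ) (hμ : 0 < μ) (hb : 0 < b) (hγ : 0 < γ)
    (hγh : (k : ℝ) / (k + 1) ≤ γ)
    (Z : ℝ → ℝ)
    (hZ : ∀ᶠ α in 𝓝[>] (0 : ℝ),
      0 ≤ Z α ∧
      (Z α : EReal) = ⨆ u : {u : ℝ // 0 ≤ u},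
        (((1 + c * α ^ γ) * (u : ℝ) - (u : ℝ) / (1 - F (α * Z α))
          + b * Real.sqrt ((1 + c * α ^ γ) * (u : ℝ)
              * Iw ((1 + c * α ^ γ) * μ * (u : ℝ)) / μ) : ℝ) : EReal)) :
    ∃ Zhat : ℝ, 0 < Zhat ∧
      Tendsto (fun α : ℝ => α ^ ((k : ℝ) / (k + 1)) * Z α)
        (𝓝[>] (0 : ℝ)) (𝓝 Zhat) ∧
      (-(if γ = (k : ℝ) / (k + 1) then (1 : ℝ) else 0) * c * Zhat
        + iteratedDerivWithin k F (Set.Ici 0) 0 / (Nat.factorial k) * Zhat ^ (k + 1)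
        = cx2 * b ^ 2 / (4 * μ)) ∧
      ∀ z : ℝ, 0 < z →
        (-(if γ = (k : ℝ) / (k + 1) then (1 : ℝ) else 0) * c * z
          + iteratedDerivWithin k F (Set.Ici 0) 0 / (Nat.factorial k) * z ^ (k + 1)
          = cx2 * b ^ 2 / (4 * μ)) → z = Zhat := by
  have hρ : Tendsto (fun α : ℝ => (1 + c * α ^ γ - 1) / α ^ ((k : ℝ) / (k + 1))) (𝓝[>] 0)
      (𝓝 ((if γ = (k : ℝ) / (k + 1) then 1 else 0) * c)) := by
    simpa only [add_sub_cancel_left, mul_comm c, mul_div_right_comm] using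
      (tendsto_rpow_div_rpow_nhdsGT_zero hγh).mul_const c
  have hgeneral := rq_heavy_traffic_critical_general
    (isPatienceCDF_of_contDiffOn (by lia) (hF_mono.monotoneOn _)
      (fun x hx => (hF_range x hx).2) hF_smooth hF_derivs hF_k)
    ⟨hIw_nonneg, hIw_bdd, hcx2, hIw_lim⟩ hμ hb tendsto_id hρ
    (hZ.mono fun α hα => isRQFixedPoint_of_coe_eq_iSup hα.2)
  simpa only [id_eq, ← neg_mul, ← Nat.cast_add_one, Real.rpow_natCast] using hgeneral
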